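/- arXiv:0911.5030 — 7 statements merged into one kernel-verified Lean document; each statement's English description precedes it below -/
import Mathlib

section
/- Let N be odd and let J_x, J_y, J_z be arbitrary real couplings. Then every eigenvalue of the periodic XYZ Hamiltonian H_XYZ on V_N is at least doubly degenerate: for every λ ∈ ℂ, if the eigenspace {Ψ ∈ V_N : H_XYZ Ψ = λ Ψ} is nonzero, then its complex dimension is at least 2. -/
open Finset

/-- Spin configurations of length `N`: maps `ℤ/N → {−1,+1}` (spins encoded as units of `ℤ`). -/
abbrev Config (N : ℕ) : Type := ZMod N → ℤˣ

/-- The state space `V_N`: complex-valued functions on configurations. -/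
abbrev StateSpace (N : ℕ) : Type := Config N → ℂ

/-- The spin value `μ_j` as a complex number (`+1` or `−1`). -/
def spin {N : ℕ} (μ : Config N) (j : ZMod N) : ℂ := ((μ j : ℤ) : ℂ)

/-- Flip the spin at site `j`. -/
def flipAt {N : ℕ} (μ : Config N) (j : ZMod N) : Config N :=
  Function.update μ j (-(μ j))

/-- `μ^{(j,j+1)}`: the configuration `μ` with the spins at sites `j` and `j+1` (mod `N`) flipped. -/
def flipPair {N : ℕ} (μ : Config N) (j : ZMod N) : Config N :=
  flipAt (flipAt μ j) (j + 1)

/-- The periodic XYZ Hamiltonian with real couplings `Jx, Jy, Jz`: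
`(H Ψ)(μ) = −(1/2) Σ_j [(Jx − Jy μ_j μ_{j+1}) Ψ(μ^{(j,j+1)}) + Jz μ_j μ_{j+1} Ψ(μ)]`. -/
noncomputable def Hxyz (N : ℕ) [NeZero N] (Jx Jy Jz : ℝ) (Ψ : StateSpace N) : StateSpace N :=
  fun μ => -(1/2 : ℂ) * ∑ j : ZMod N,
    (((Jx : ℂ) - (Jy : ℂ) * spin μ j * spin μ (j + 1)) * Ψ (flipPair μ j)
      + (Jz : ℂ) * spin μ j * spin μ (j + 1) * Ψ μ)

/-- The periodic XYZ Hamiltonian as a linear operator on `V_N`. -/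
noncomputable def HxyzL (N : ℕ) [NeZero N] (Jx Jy Jz : ℝ) : Module.End ℂ (StateSpace N) where
  toFun := Hxyz N Jx Jy Jz
  map_add' Ψ Φ := by
    funext μ
    simp only [Hxyz, Pi.add_apply, mul_add, add_mul, Finset.sum_add_distrib]
    ring
  map_smul' c Ψ := by
    funext μ
    simp only [Hxyz, Pi.smul_apply, smul_eq_mul, RingHom.id_apply, mul_add, add_mul,
      Finset.mul_sum, Finset.sum_add_distrib]
    congr 1 <;> exact Finset.sum_congr rfl (fun j _ => by ring)

/-- An eigenspace preserved by two anticommuting injective operators has dimension at least `2`. -/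
theorem two_le_finrank_eigenspace_of_anticommute {K V : Type*} [Field K] [CharZero K]
    [AddCommGroup V] [Module K V] [FiniteDimensional K V] {T A B : Module.End K V}
    (hA : Commute T A) (hB : Commute T B) (hAinj : Function.Injective A)
    (hBinj : Function.Injective B) (hAB : ∀ v, A (B v) = -B (A v)) {c : K}
    (h : Module.End.eigenspace T c ≠ ⊥) : 2 ≤ Module.finrank K (Module.End.eigenspace T c) := by
  obtain ⟨v, hv, hv0⟩ := Submodule.exists_mem_ne_zero_of_ne_bot h
  have maps {S : Module.End K V} (hS : Commute T S) : S v ∈ Module.End.eigenspace T c := by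
    rw [Module.End.mem_eigenspace_iff] at hv ⊢
    rw [← Module.End.mul_apply, hS.eq, Module.End.mul_apply, hv, map_smul]
  by_contra! hlt
  have hpos : Module.finrank K (Module.End.eigenspace T c) ≠ 0 := by
    rwa [Ne, Submodule.finrank_eq_zero]
  have hone : Module.finrank K (Module.End.eigenspace T c) = 1 := by lia
  have hv0' : (⟨v, hv⟩ : Module.End.eigenspace T c) ≠ 0 := by simpa using hv0
  have span := (finrank_eq_one_iff_of_nonzero' _ hv0').1 hone
  obtain ⟨a, ha⟩ := span ⟨A v, maps hA⟩
  obtain ⟨b, hb⟩ := span ⟨B v, maps hB⟩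
  replace ha : a • v = A v := congrArg Subtype.val ha
  replace hb : b • v = B v := congrArg Subtype.val hb
  have ha0 : a ≠ 0 := by
    rintro rfl
    exact hv0 (hAinj (by rw [← ha, zero_smul, map_zero]))
  have hb0 : b ≠ 0 := by
    rintro rfl
    exact hv0 (hBinj (by rw [← hb, zero_smul, map_zero]))
  have key := hAB v
  rw [← hb, ← ha, map_smul, map_smul, ← ha, ← hb, smul_comm a b v] at key
  have htwo : (2 : K) • b • a • v = 0 := by
    rw [two_smul]
    exact add_eq_zero_iff_eq_neg.2 key
  simp only [smul_eq_zero, two_ne_zero, ha0, hb0, hv0, or_self] at htwo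

theorem spin_neg {N : ℕ} (μ : Config N) (j : ZMod N) : spin (-μ) j = -spin μ j := by
  simp [spin]

theorem spin_ne_zero {N : ℕ} (μ : Config N) (j : ZMod N) : spin μ j ≠ 0 := by
  simp [spin]

theorem flipAt_neg {N : ℕ} (μ : Config N) (j : ZMod N) : flipAt (-μ) j = -flipAt μ j := by
  rw [flipAt, flipAt, Pi.neg_apply, ← Function.update_neg]

theorem flipPair_neg {N : ℕ} (μ : Config N) (j : ZMod N) : flipPair (-μ) j = -flipPair μ j := by
  simp only [flipPair, flipAt_neg]

/-- The product of all spins of a configuration. -/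
noncomputable def spinParity {N : ℕ} [NeZero N] (μ : Config N) : ℂ := ∏ j, spin μ j

theorem spinParity_ne_zero {N : ℕ} [NeZero N] (μ : Config N) : spinParity μ ≠ 0 :=
  Finset.prod_ne_zero_iff.2 fun j _ => spin_ne_zero μ j

theorem spinParity_neg {N : ℕ} [NeZero N] (hN : Odd N) (μ : Config N) :
    spinParity (-μ) = -spinParity μ := by
  simp [spinParity, spin_neg, Finset.prod_neg, ZMod.card, hN.neg_one_pow]

theorem spinParity_flipAt {N : ℕ} [NeZero N] (μ : Config N) (j : ZMod N) :
    spinParity (flipAt μ j) = -spinParity μ := by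
  rw [spinParity, spinParity, Fintype.prod_eq_mul_prod_compl j,
    Fintype.prod_eq_mul_prod_compl j (spin μ), ← neg_mul]
  congr 1
  · simp [spin, flipAt]
  · refine Finset.prod_congr rfl fun k hk => ?_
    have hkj : k ≠ j := by simpa using hk
    simp [spin, flipAt, hkj]

theorem spinParity_flipPair {N : ℕ} [NeZero N] (μ : Config N) (j : ZMod N) :
    spinParity (flipPair μ j) = spinParity μ := by
  rw [flipPair, spinParity_flipAt, spinParity_flipAt, neg_neg]

/-- The operator reversing all spins. -/
def spinReversal (N : ℕ) : Module.End ℂ (StateSpace N) :=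
  LinearMap.funLeft ℂ ℂ (fun μ : Config N => -μ)

/-- The diagonal operator multiplying by the product of all spins. -/
noncomputable def parityOperator (N : ℕ) [NeZero N] : Module.End ℂ (StateSpace N) :=
  LinearMap.mulLeft ℂ (spinParity : StateSpace N)

theorem commute_HxyzL_spinReversal (N : ℕ) [NeZero N] (Jx Jy Jz : ℝ) :
    Commute (HxyzL N Jx Jy Jz) (spinReversal N) := by
  refine LinearMap.ext fun Ψ => funext fun μ => ?_
  simp [HxyzL, Hxyz, spinReversal, LinearMap.funLeft_apply, flipPair_neg, spin_neg]

theorem commute_HxyzL_parityOperator (N : ℕ) [NeZero N] (Jx Jy Jz : ℝ) :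
    Commute (HxyzL N Jx Jy Jz) (parityOperator N) := by
  refine LinearMap.ext fun Ψ => funext fun μ => ?_
  simp only [HxyzL, Hxyz, parityOperator, Module.End.mul_apply, LinearMap.coe_mk, AddHom.coe_mk,
    LinearMap.mulLeft_apply, Pi.mul_apply, spinParity_flipPair, Finset.mul_sum]
  exact Finset.sum_congr rfl fun j _ => by ring

/-- For odd `N`, every eigenvalue of the periodic XYZ Hamiltonian is at least doubly
degenerate: every nonzero eigenspace has complex dimension at least `2`. -/
theorem xyz_eigenvalue_doubly_degenerate (N : ℕ) [NeZero N] (hN : Odd N)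
    (Jx Jy Jz : ℝ) (lam : ℂ)
    (h : Module.End.eigenspace (HxyzL N Jx Jy Jz) lam ≠ ⊥) :
    2 ≤ Module.finrank ℂ (Module.End.eigenspace (HxyzL N Jx Jy Jz) lam) := by
  refine two_le_finrank_eigenspace_of_anticommute (commute_HxyzL_spinReversal N Jx Jy Jz)
    (commute_HxyzL_parityOperator N Jx Jy Jz)
    (LinearMap.funLeft_injective_of_surjective ℂ ℂ _ neg_surjective) ?_ ?_ h
  · intro Ψ Φ hΨΦ
    funext μ
    exact mul_left_cancel₀ (spinParity_ne_zero μ) (congrFun hΨΦ μ)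
  · intro Ψ
    funext μ
    simp [spinReversal, parityOperator, LinearMap.funLeft_apply, spinParity_neg hN]
end

section
/- For every N ≥ 1 and every α ∈ ℝ with α ≠ 1, the operator identity R^y ∘ H(α) = ((α−1)²/4) · H((α+3)/(α−1)) ∘ R^y holds on V_N, where R^y is the operator of rotation of every spin by the angle π/2 about the y-axis. -/
open Finset

/-- `H(α)`: the XYZ Hamiltonian with `Jx = 1+α`, `Jy = 1−α`, `Jz = (α²−1)/2`. -/
noncomputable def Halpha (N : ℕ) [NeZero N] (α : ℝ) : StateSpace N → StateSpace N :=
  Hxyz N (1 + α) (1 - α) ((α ^ 2 - 1) / 2)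

/-- `m(μ,ν) = #{j : μ_j = −1 and ν_j = +1}`. -/
def mCount {N : ℕ} [NeZero N] (μ ν : Config N) : ℕ :=
  (Finset.univ.filter (fun j => μ j = -1 ∧ ν j = 1)).card

/-- Rotation of every spin by π/2 about the y-axis:
`(Rʸ Ψ)(μ) = 2^{−N/2} Σ_ν (−1)^{m(μ,ν)} Ψ(ν)`. -/
noncomputable def Ry (N : ℕ) [NeZero N] (Ψ : StateSpace N) : StateSpace N :=
  fun μ => ((Real.sqrt 2 : ℂ) ^ N)⁻¹ * ∑ ν : Config N, (-1 : ℂ) ^ mCount μ ν * Ψ ν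

/-- The sign `(−1)^{m(μ,ν)}` factorizes over the sites. -/
lemma neg_one_pow_mCount {N : ℕ} [NeZero N] (μ ν : Config N) :
    (-1 : ℂ) ^ mCount μ ν = ∏ j, if μ j = -1 ∧ ν j = 1 then (-1 : ℂ) else 1 := by
  rw [mCount, Finset.prod_ite]
  simp

lemma spin_flipAt_of_ne {N : ℕ} (μ : Config N) {i j : ZMod N} (h : i ≠ j) :
    spin (flipAt μ j) i = spin μ i := by
  simp [spin, flipAt, h]

lemma spin_flipAt_self {N : ℕ} (μ : Config N) (j : ZMod N) :
    spin (flipAt μ j) j = -spin μ j := by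
  simp [spin, flipAt]

lemma neg_one_pow_mCount_flipAt_right {N : ℕ} [NeZero N] (μ ν : Config N) (j : ZMod N) :
    (-1 : ℂ) ^ mCount μ (flipAt ν j) = spin μ j * (-1 : ℂ) ^ mCount μ ν := by
  have h : spin μ j = ∏ i, if i = j then spin μ i else 1 := by simp
  rw [neg_one_pow_mCount, neg_one_pow_mCount, h, ← Finset.prod_mul_distrib]
  refine Finset.prod_congr rfl fun i _ => ?_
  by_cases hij : i = j
  · subst hij
    rcases Int.units_eq_one_or (μ i) with hμ | hμ <;>
      rcases Int.units_eq_one_or (ν i) with hν | hν <;>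
      simp [spin, flipAt, hμ, hν]
  · simp [flipAt, hij]

lemma neg_one_pow_mCount_flipAt_left {N : ℕ} [NeZero N] (μ ν : Config N) (j : ZMod N) :
    (-1 : ℂ) ^ mCount (flipAt μ j) ν = -spin ν j * (-1 : ℂ) ^ mCount μ ν := by
  have h : -spin ν j = ∏ i, if i = j then -spin ν i else 1 := by simp
  rw [neg_one_pow_mCount, neg_one_pow_mCount, h, ← Finset.prod_mul_distrib]
  refine Finset.prod_congr rfl fun i _ => ?_
  by_cases hij : i = j
  · subst hij
    rcases Int.units_eq_one_or (μ i) with hμ | hμ <;>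
      rcases Int.units_eq_one_or (ν i) with hν | hν <;>
      simp [spin, flipAt, hμ, hν]
  · simp [flipAt, hij]

lemma neg_one_pow_mCount_flipPair_right {N : ℕ} [NeZero N] (μ ν : Config N) (j : ZMod N) :
    (-1 : ℂ) ^ mCount μ (flipPair ν j)
      = spin μ j * spin μ (j + 1) * (-1 : ℂ) ^ mCount μ ν := by
  rw [flipPair, neg_one_pow_mCount_flipAt_right, neg_one_pow_mCount_flipAt_right]
  ring

lemma neg_one_pow_mCount_flipPair_left {N : ℕ} [NeZero N] (μ ν : Config N) (j : ZMod N) :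
    (-1 : ℂ) ^ mCount (flipPair μ j) ν
      = spin ν j * spin ν (j + 1) * (-1 : ℂ) ^ mCount μ ν := by
  rw [flipPair, neg_one_pow_mCount_flipAt_left, neg_one_pow_mCount_flipAt_left]
  ring

lemma spin_mul_spin_flipPair {N : ℕ} (μ : Config N) (j : ZMod N) :
    spin (flipPair μ j) j * spin (flipPair μ j) (j + 1) = spin μ j * spin μ (j + 1) := by
  by_cases h : j = j + 1
  · rw [flipPair, ← h, spin_flipAt_self, spin_flipAt_self, neg_neg]
  · rw [flipPair, spin_flipAt_of_ne _ h, spin_flipAt_self, spin_flipAt_self,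
      spin_flipAt_of_ne _ (Ne.symm h), neg_mul_neg]

lemma flipPair_involutive {N : ℕ} (j : ZMod N) :
    Function.Involutive fun μ : Config N => flipPair μ j := by
  intro μ
  funext i
  simp only [flipPair, flipAt, Function.update_apply]
  grind [neg_neg]

/-- One bond of the XYZ Hamiltonian passes through the rotation kernel with the roles of `Jx`
and `Jz` exchanged. -/
lemma sum_neg_one_pow_mCount_mul_bond {N : ℕ} [NeZero N] (Jx Jy Jz : ℂ) (Ψ : StateSpace N)
    (μ : Config N) (j : ZMod N) :
    ∑ ν : Config N, (-1 : ℂ) ^ mCount μ ν *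
        ((Jx - Jy * spin ν j * spin ν (j + 1)) * Ψ (flipPair ν j)
          + Jz * spin ν j * spin ν (j + 1) * Ψ ν)
      = (Jz - Jy * spin μ j * spin μ (j + 1)) *
          ∑ ν : Config N, (-1 : ℂ) ^ mCount (flipPair μ j) ν * Ψ ν
        + Jx * spin μ j * spin μ (j + 1) * ∑ ν : Config N, (-1 : ℂ) ^ mCount μ ν * Ψ ν := by
  have hflip : ∑ ν : Config N, (-1 : ℂ) ^ mCount μ ν *
        ((Jx - Jy * spin ν j * spin ν (j + 1)) * Ψ (flipPair ν j))
      = ∑ ν : Config N, (-1 : ℂ) ^ mCount μ (flipPair ν j) *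
        ((Jx - Jy * (spin ν j * spin ν (j + 1))) * Ψ ν) := by
    refine Fintype.sum_equiv (flipPair_involutive j).toPerm _ _ fun ν => ?_
    have hν : flipPair (flipPair ν j) j = ν := flipPair_involutive j ν
    simp only [Function.Involutive.coe_toPerm, hν, spin_mul_spin_flipPair, mul_assoc]
  simp only [mul_add, Finset.sum_add_distrib]
  rw [hflip]
  simp only [neg_one_pow_mCount_flipPair_left, neg_one_pow_mCount_flipPair_right,
    Finset.mul_sum, ← Finset.sum_add_distrib]
  refine Finset.sum_congr rfl fun ν _ => ?_
  ring

/-- The rotation by `π/2` about the `y`-axis exchanges the couplings `Jx` and `Jz`. -/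
lemma Ry_Hxyz {N : ℕ} [NeZero N] (Jx Jy Jz : ℝ) (Ψ : StateSpace N) :
    Ry N (Hxyz N Jx Jy Jz Ψ) = Hxyz N Jz Jy Jx (Ry N Ψ) := by
  funext μ
  simp only [Ry, Hxyz]
  have hswap : ∑ ν : Config N, (-1 : ℂ) ^ mCount μ ν * (-(1/2 : ℂ) * ∑ j : ZMod N,
        (((Jx : ℂ) - (Jy : ℂ) * spin ν j * spin ν (j + 1)) * Ψ (flipPair ν j)
          + (Jz : ℂ) * spin ν j * spin ν (j + 1) * Ψ ν))
      = -(1/2 : ℂ) * ∑ j : ZMod N, ∑ ν : Config N, (-1 : ℂ) ^ mCount μ ν *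
        (((Jx : ℂ) - (Jy : ℂ) * spin ν j * spin ν (j + 1)) * Ψ (flipPair ν j)
          + (Jz : ℂ) * spin ν j * spin ν (j + 1) * Ψ ν) := by
    rw [Finset.sum_comm, Finset.mul_sum]
    refine Finset.sum_congr rfl fun ν _ => ?_
    rw [← Finset.mul_sum]
    ring
  rw [hswap, mul_left_comm, Finset.mul_sum]
  congr 1
  refine Finset.sum_congr rfl fun j _ => ?_
  rw [sum_neg_one_pow_mCount_mul_bond]
  ring

lemma smul_Hxyz {N : ℕ} [NeZero N] (c Jx Jy Jz : ℝ) (Ψ : StateSpace N) :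
    (c : ℂ) • Hxyz N Jx Jy Jz Ψ = Hxyz N (c * Jx) (c * Jy) (c * Jz) Ψ := by
  funext μ
  simp only [Hxyz, Pi.smul_apply, smul_eq_mul, Complex.ofReal_mul]
  rw [mul_left_comm, Finset.mul_sum]
  congr 1
  refine Finset.sum_congr rfl fun j _ => ?_
  ring

/-- `Rʸ ∘ H(α) = ((α−1)²/4) · H((α+3)/(α−1)) ∘ Rʸ` for `α ≠ 1`. -/
theorem Ry_conjugates_H (N : ℕ) [NeZero N] (α : ℝ) (hα : α ≠ 1) :
    Ry N ∘ Halpha N α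
      = (((α - 1) ^ 2 / 4 : ℝ) : ℂ) • (Halpha N ((α + 3) / (α - 1)) ∘ Ry N) := by
  have h : α - 1 ≠ 0 := sub_ne_zero.mpr hα
  funext Ψ
  simp only [Function.comp_apply, Pi.smul_apply, Halpha]
  rw [Ry_Hxyz, smul_Hxyz]
  congr 1 <;> field_simp <;> ring
end

section
/- Let N = 3 and α ∈ ℝ. Define Ψ : {−1,+1}³ → ℂ by Ψ(−,−,−) = α, Ψ(−,+,+) = Ψ(+,−,+) = Ψ(+,+,−) = 1, and Ψ(μ) = 0 for all other configurations μ. Then H(α) Ψ = −(3/4)(3+α²) · Ψ, and moreover S Ψ = Ψ for the cyclic shift operator S. -/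
open Finset

/-- The cyclic shift operator: `(S Ψ)(μ) = Ψ(j ↦ μ_{j+1})`. -/
def shift (N : ℕ) (Ψ : StateSpace N) : StateSpace N :=
  fun μ => Ψ (fun j => μ (j + 1))

/-- The `N = 3` eigenvector: `Ψ(−,−,−) = α`, `Ψ(−,+,+) = Ψ(+,−,+) = Ψ(+,+,−) = 1`,
and `Ψ = 0` on all other configurations. -/
noncomputable def Psi3 (α : ℝ) : StateSpace 3 := fun μ =>
  if μ 0 = -1 ∧ μ 1 = -1 ∧ μ 2 = -1 then (α : ℂ)
  else if (μ 0 = -1 ∧ μ 1 = 1 ∧ μ 2 = 1) ∨ (μ 0 = 1 ∧ μ 1 = -1 ∧ μ 2 = 1)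
      ∨ (μ 0 = 1 ∧ μ 1 = 1 ∧ μ 2 = -1) then 1
  else 0

/-- For `N = 3`, the displayed vector is an eigenvector of `H(α)` with eigenvalue
`−(3/4)(3+α²)`, and it is invariant under the cyclic shift. -/
theorem psi3_eigenvector (α : ℝ) :
    Halpha 3 α (Psi3 α) = ((-(3 / 4) * (3 + α ^ 2) : ℝ) : ℂ) • Psi3 α
      ∧ shift 3 (Psi3 α) = Psi3 α := by
  constructor
  · funext μ
    have sum_three (f : ZMod 3 → ℂ) : ∑ j, f j = f 0 + f 1 + f 2 := Fin.sum_univ_three f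
    have one_add_one : (1 + 1 : ZMod 3) = 2 := by decide
    have two_add_one : (2 + 1 : ZMod 3) = 0 := by decide
    have zero_ne_two : (0 : ZMod 3) ≠ 2 := by decide
    have one_ne_two : (1 : ZMod 3) ≠ 2 := by decide
    have neg_one_ne_one : (-1 : ℤˣ) ≠ 1 := by decide
    rcases Int.units_eq_one_or (μ 0) with h0 | h0 <;>
    rcases Int.units_eq_one_or (μ 1) with h1 | h1 <;>
    rcases Int.units_eq_one_or (μ 2) with h2 | h2 <;>
    simp [Halpha, Hxyz, sum_three, one_add_one, two_add_one, Psi3, flipPair, flipAt, spin,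
      Function.update_apply, h0, h1, h2, zero_ne_two, zero_ne_two.symm, one_ne_two,
      one_ne_two.symm, neg_one_ne_one, neg_one_ne_one.symm] <;>
    ring
  · funext μ
    have one_add_one : (1 + 1 : ZMod 3) = 2 := by decide
    have two_add_one : (2 + 1 : ZMod 3) = 0 := by decide
    rcases Int.units_eq_one_or (μ 0) with h0 | h0 <;>
    rcases Int.units_eq_one_or (μ 1) with h1 | h1 <;>
    rcases Int.units_eq_one_or (μ 2) with h2 | h2 <;>
    simp [shift, Psi3, one_add_one, two_add_one, h0, h1, h2]
end

section
/- Let N = 5 and α ∈ ℝ. Define Ψ : {−1,+1}⁵ → ℂ by: Ψ = α + α³ on the configuration (−,−,−,−,−); Ψ = 1 + α² on the 5 cyclic shifts of (−,−,−,+,+); Ψ = 2 on the 5 cyclic shifts of (−,−,+,−,+); Ψ = 2α on the 5 cyclic shifts of (−,+,+,+,+); and Ψ(μ) = 0 for all other configurations μ. Then H(α) Ψ = −(5/4)(3+α²) · Ψ. -/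
open Finset

/-- `ν` is a cyclic shift of `c`: `ν_j = c_{j+k}` for some `k`. -/
def isShiftOf {N : ℕ} (ν c : Config N) : Prop := ∃ k : ZMod N, ∀ j, ν j = c (j + k)

instance {N : ℕ} [NeZero N] (ν c : Config N) : Decidable (isShiftOf ν c) :=
  inferInstanceAs (Decidable (∃ k : ZMod N, ∀ j, ν j = c (j + k)))

/-- The configuration whose spins are `+1` exactly on the set `s`. -/
def cfgOfPlus (N : ℕ) (s : Finset (ZMod N)) : Config N := fun j => if j ∈ s then 1 else -1

/-- The `N = 5` eigenvector: `α + α³` on `(−,−,−,−,−)`, `1 + α²` on the cyclic shifts of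
`(−,−,−,+,+)`, `2` on the cyclic shifts of `(−,−,+,−,+)`, `2α` on the cyclic shifts of
`(−,+,+,+,+)`, and `0` elsewhere. -/
noncomputable def Psi5 (α : ℝ) : StateSpace 5 := fun μ =>
  if μ = cfgOfPlus 5 ∅ then ((α + α ^ 3 : ℝ) : ℂ)
  else if isShiftOf μ (cfgOfPlus 5 {3, 4}) then ((1 + α ^ 2 : ℝ) : ℂ)
  else if isShiftOf μ (cfgOfPlus 5 {2, 4}) then 2
  else if isShiftOf μ (cfgOfPlus 5 {1, 2, 3, 4}) then ((2 * α : ℝ) : ℂ)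
  else 0

/-- The configuration of length `5` with the listed spins. -/
def cfgFive (a b c d e : ℤˣ) : Config 5 := ![a, b, c, d, e]

lemma exists_eq_cfgFive (μ : Config 5) : ∃ a b c d e, μ = cfgFive a b c d e :=
  ⟨μ 0, μ 1, μ 2, μ 3, μ 4, by funext i; fin_cases i <;> rfl⟩

lemma spin_cfgFive (a b c d e : ℤˣ) :
    spin (cfgFive a b c d e) 0 = (a : ℤ) ∧ spin (cfgFive a b c d e) 1 = (b : ℤ) ∧
      spin (cfgFive a b c d e) 2 = (c : ℤ) ∧ spin (cfgFive a b c d e) 3 = (d : ℤ) ∧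
      spin (cfgFive a b c d e) 4 = (e : ℤ) :=
  ⟨rfl, rfl, rfl, rfl, rfl⟩

lemma flipPair_cfgFive (a b c d e : ℤˣ) :
    flipPair (cfgFive a b c d e) 0 = cfgFive (-a) (-b) c d e ∧
      flipPair (cfgFive a b c d e) 1 = cfgFive a (-b) (-c) d e ∧
      flipPair (cfgFive a b c d e) 2 = cfgFive a b (-c) (-d) e ∧
      flipPair (cfgFive a b c d e) 3 = cfgFive a b c (-d) (-e) ∧
      flipPair (cfgFive a b c d e) 4 = cfgFive (-a) b c d (-e) := by
  refine ⟨?_, ?_, ?_, ?_, ?_⟩ <;> funext i <;> fin_cases i <;> rfl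

/-- For `N = 5`, the displayed vector is an eigenvector of `H(α)` with eigenvalue
`−(5/4)(3+α²)`. -/
theorem psi5_eigenvector (α : ℝ) :
    Halpha 5 α (Psi5 α) = ((-(5 / 4) * (3 + α ^ 2) : ℝ) : ℂ) • Psi5 α := by
  have sum_zmod (f : ZMod 5 → ℂ) : ∑ j, f j = f 0 + f 1 + f 2 + f 3 + f 4 :=
    Fin.sum_univ_five f
  have succ_eq : (0 + 1 : ZMod 5) = 1 ∧ (1 + 1 : ZMod 5) = 2 ∧ (2 + 1 : ZMod 5) = 3 ∧
    (3 + 1 : ZMod 5) = 4 ∧ (4 + 1 : ZMod 5) = 0 := by decide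
  funext μ
  obtain ⟨a, b, c, d, e, rfl⟩ := exists_eq_cfgFive μ
  rw [Pi.smul_apply, smul_eq_mul, Halpha, Hxyz, sum_zmod]
  simp only [succ_eq, spin_cfgFive, flipPair_cfgFive, Psi5]
  rcases Int.units_eq_one_or a with rfl | rfl <;> rcases Int.units_eq_one_or b with rfl | rfl <;>
  rcases Int.units_eq_one_or c with rfl | rfl <;> rcases Int.units_eq_one_or d with rfl | rfl <;>
  rcases Int.units_eq_one_or e with rfl | rfl <;>
  · simp +decide only [if_true, if_false]
    push_cast
    ring
end

section
/- Let N = 7 and α ∈ ℝ. Define Ψ : {−1,+1}⁷ → ℂ by: Ψ = 4α² + 3α⁴ + α⁶ on (−,−,−,−,−,−,−); Ψ = 4α + 3α³ + α⁵ on the 7 cyclic shifts of (−,−,−,−,−,+,+); Ψ = 7α + α³ on the 7 cyclic shifts of (−,−,−,−,+,−,+) and on the 7 cyclic shifts of (−,−,−,+,−,−,+); Ψ = 1 + 5α² + 2α⁴ on the 7 cyclic shifts of (−,−,−,+,+,+,+); Ψ = 3 + 5α² on the 7 cyclic shifts of (−,−,+,−,+,+,+) and on the 7 cyclic shifts of (−,+,−,−,+,+,+);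 Ψ = 4 + 3α² + α⁴ on the 7 cyclic shifts of (−,−,+,+,−,+,+); Ψ = 7 + α² on the 7 cyclic shifts of (−,+,−,+,−,+,+); Ψ = 3α + 5α³ on the 7 cyclic shifts of (−,+,+,+,+,+,+); and Ψ(μ) = 0 for all other configurations μ. Then H(α) Ψ = −(7/4)(3+α²) · Ψ. -/
open Finset

/-- The `N = 7` eigenvector, with the components listed in the statement. -/
noncomputable def Psi7 (α : ℝ) : StateSpace 7 := fun μ =>
  if μ = cfgOfPlus 7 ∅ then ((4 * α ^ 2 + 3 * α ^ 4 + α ^ 6 : ℝ) : ℂ)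
  else if isShiftOf μ (cfgOfPlus 7 {5, 6}) then ((4 * α + 3 * α ^ 3 + α ^ 5 : ℝ) : ℂ)
  else if isShiftOf μ (cfgOfPlus 7 {4, 6}) ∨ isShiftOf μ (cfgOfPlus 7 {3, 6}) then
    ((7 * α + α ^ 3 : ℝ) : ℂ)
  else if isShiftOf μ (cfgOfPlus 7 {3, 4, 5, 6}) then ((1 + 5 * α ^ 2 + 2 * α ^ 4 : ℝ) : ℂ)
  else if isShiftOf μ (cfgOfPlus 7 {2, 4, 5, 6}) ∨ isShiftOf μ (cfgOfPlus 7 {1, 4, 5, 6}) then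
    ((3 + 5 * α ^ 2 : ℝ) : ℂ)
  else if isShiftOf μ (cfgOfPlus 7 {2, 3, 5, 6}) then ((4 + 3 * α ^ 2 + α ^ 4 : ℝ) : ℂ)
  else if isShiftOf μ (cfgOfPlus 7 {1, 3, 5, 6}) then ((7 + α ^ 2 : ℝ) : ℂ)
  else if isShiftOf μ (cfgOfPlus 7 {1, 2, 3, 4, 5, 6}) then ((3 * α + 5 * α ^ 3 : ℝ) : ℂ)
  else 0

/-- The coefficients, in increasing degree, of the component of `Psi7 α` at `μ`, as a polynomial
in `α`. -/
def psi7Coeffs (μ : Config 7) : List ℤ :=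
  if μ = cfgOfPlus 7 ∅ then [0, 0, 4, 0, 3, 0, 1]
  else if isShiftOf μ (cfgOfPlus 7 {5, 6}) then [0, 4, 0, 3, 0, 1]
  else if isShiftOf μ (cfgOfPlus 7 {4, 6}) ∨ isShiftOf μ (cfgOfPlus 7 {3, 6}) then [0, 7, 0, 1]
  else if isShiftOf μ (cfgOfPlus 7 {3, 4, 5, 6}) then [1, 0, 5, 0, 2]
  else if isShiftOf μ (cfgOfPlus 7 {2, 4, 5, 6}) ∨ isShiftOf μ (cfgOfPlus 7 {1, 4, 5, 6}) then
    [3, 0, 5]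
  else if isShiftOf μ (cfgOfPlus 7 {2, 3, 5, 6}) then [4, 0, 3, 0, 1]
  else if isShiftOf μ (cfgOfPlus 7 {1, 3, 5, 6}) then [7, 0, 1]
  else if isShiftOf μ (cfgOfPlus 7 {1, 2, 3, 4, 5, 6}) then [0, 3, 0, 5]
  else []

/-- Sum of coefficient lists. -/
def addCoeffs : List ℤ → List ℤ → List ℤ
  | [], m => m
  | l, [] => l
  | a :: l, b :: m => (a + b) :: addCoeffs l m

/-- Value at `x` of the polynomial with the given coefficients. -/
noncomputable def evalCoeffs (x : ℂ) : List ℤ → ℂ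
  | [] => 0
  | a :: l => a + x * evalCoeffs x l

theorem evalCoeffs_addCoeffs (x : ℂ) (l m : List ℤ) :
    evalCoeffs x (addCoeffs l m) = evalCoeffs x l + evalCoeffs x m := by
  induction l generalizing m with
  | nil => simp [addCoeffs, evalCoeffs]
  | cons a l ih =>
    cases m with
    | nil => simp [addCoeffs, evalCoeffs]
    | cons b m =>
      simp only [addCoeffs, evalCoeffs, ih]
      push_cast
      ring

theorem evalCoeffs_map_mul (x : ℂ) (c : ℤ) (l : List ℤ) :
    evalCoeffs x (l.map (c * ·)) = c * evalCoeffs x l := by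
  induction l with
  | nil => simp [evalCoeffs]
  | cons a l ih =>
    simp only [List.map_cons, evalCoeffs, ih]
    push_cast
    ring

theorem evalCoeffs_eq_zero (x : ℂ) {l : List ℤ} (h : ∀ a ∈ l, a = 0) : evalCoeffs x l = 0 := by
  induction l with
  | nil => rfl
  | cons a l ih =>
    rw [List.forall_mem_cons] at h
    simp [evalCoeffs, h.1, ih h.2]

theorem psi7_eq_evalCoeffs (α : ℝ) (μ : Config 7) :
    Psi7 α μ = evalCoeffs α (psi7Coeffs μ) := by
  unfold Psi7 psi7Coeffs
  split_ifs <;> simp only [evalCoeffs] <;> push_cast <;> ring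

/-- The coefficients of the component of `Psi7 α` at a configuration with spins `a, …, g`. They
depend only on the total spin and on the spin correlations at distances one and two. -/
def spinCoeffs (a b c d e f g : ℤ) : List ℤ :=
  let m := a + b + c + d + e + f + g
  let p := a * b + b * c + c * d + d * e + e * f + f * g + g * a
  let q := a * c + b * d + c * e + d * f + e * g + f * a + g * b
  if m = -7 then [0, 0, 4, 0, 3, 0, 1]
  else if m = -3 then if p = 3 then [0, 4, 0, 3, 0, 1] else [0, 7, 0, 1]
  else if m = 1 then
    if p = 3 then [1, 0, 5, 0, 2]
    else if p = -5 then [7, 0, 1]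
    else if q = -1 then [3, 0, 5]
    else [4, 0, 3, 0, 1]
  else if m = 5 then [0, 3, 0, 5]
  else []

/-- The configuration of length seven with the given spins. -/
def config7 (a b c d e f g : ℤˣ) : Config 7 := ![a, b, c, d, e, f, g]

theorem psi7Coeffs_eq_spinCoeffs : ∀ a b c d e f g : ℤˣ,
    psi7Coeffs (config7 a b c d e f g) = spinCoeffs a b c d e f g := by
  decide +kernel

theorem psi7_eq_evalCoeffs_spinCoeffs (α : ℝ) (a b c d e f g : ℤˣ) :
    Psi7 α (config7 a b c d e f g) = evalCoeffs α (spinCoeffs a b c d e f g) := by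
  rw [psi7_eq_evalCoeffs, psi7Coeffs_eq_spinCoeffs]

/-- The coefficients of the contribution of one bond, with product of spins `s`, to
`-4 H(α) Ψ - 7 (3 + α²) Ψ`, where `p` and `q` are the coefficients of `Ψ` before and after
flipping the two spins of the bond. -/
def bondCoeffs (p q : List ℤ) (s : ℤ) : List ℤ :=
  if s = 1 then addCoeffs (0 :: q.map (4 * ·)) (p.map (-4 * ·))
  else addCoeffs (q.map (4 * ·)) (addCoeffs (p.map (-2 * ·)) (0 :: 0 :: p.map (-2 * ·)))

theorem evalCoeffs_bondCoeffs (x : ℂ) (p q : List ℤ) (a b : ℤˣ) :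
    evalCoeffs x (bondCoeffs p q (a * b)) =
      2 * ((1 + x) - (1 - x) * (a : ℤ) * (b : ℤ)) * evalCoeffs x q
        + ((x ^ 2 - 1) * (a : ℤ) * (b : ℤ) - (3 + x ^ 2)) * evalCoeffs x p := by
  rcases Int.units_eq_one_or a with rfl | rfl <;> rcases Int.units_eq_one_or b with rfl | rfl <;>
    simp [bondCoeffs, evalCoeffs_addCoeffs, evalCoeffs, -neg_mul, evalCoeffs_map_mul] <;> ring

/-- The coefficients of `-4 H(α) Ψ - 7 (3 + α²) Ψ` at a configuration with spins `a, …, g`. -/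
def residualCoeffs (a b c d e f g : ℤ) : List ℤ :=
  let p := spinCoeffs a b c d e f g
  addCoeffs (bondCoeffs p (spinCoeffs (-a) (-b) c d e f g) (a * b)) <|
  addCoeffs (bondCoeffs p (spinCoeffs a (-b) (-c) d e f g) (b * c)) <|
  addCoeffs (bondCoeffs p (spinCoeffs a b (-c) (-d) e f g) (c * d)) <|
  addCoeffs (bondCoeffs p (spinCoeffs a b c (-d) (-e) f g) (d * e)) <|
  addCoeffs (bondCoeffs p (spinCoeffs a b c d (-e) (-f) g) (e * f)) <|
  addCoeffs (bondCoeffs p (spinCoeffs a b c d e (-f) (-g)) (f * g)) <|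
  bondCoeffs p (spinCoeffs (-a) b c d e f (-g)) (g * a)

theorem residualCoeffs_eq_zero : ∀ a b c d e f g : ℤˣ,
    ∀ x ∈ residualCoeffs a b c d e f g, x = 0 := by
  decide +kernel

theorem flipPair_config7 (a b c d e f g : ℤˣ) :
    let μ := config7 a b c d e f g
    flipPair μ 0 = config7 (-a) (-b) c d e f g ∧ flipPair μ 1 = config7 a (-b) (-c) d e f g ∧
    flipPair μ 2 = config7 a b (-c) (-d) e f g ∧ flipPair μ 3 = config7 a b c (-d) (-e) f g ∧
    flipPair μ 4 = config7 a b c d (-e) (-f) g ∧ flipPair μ 5 = config7 a b c d e (-f) (-g) ∧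
    flipPair μ 6 = config7 (-a) b c d e f (-g) := by
  refine ⟨?_, ?_, ?_, ?_, ?_, ?_, ?_⟩ <;> funext j <;> fin_cases j <;> rfl

theorem sum_zmod_seven (F : ZMod 7 → ℂ) :
    ∑ j, F j = F 0 + F 1 + F 2 + F 3 + F 4 + F 5 + F 6 :=
  Fin.sum_univ_seven F

theorem halpha_psi7_config7 (α : ℝ) (a b c d e f g : ℤˣ) :
    Halpha 7 α (Psi7 α) (config7 a b c d e f g) =
      -(7 / 4) * (3 + (α : ℂ) ^ 2) * Psi7 α (config7 a b c d e f g) := by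
  obtain ⟨h₀, h₁, h₂, h₃, h₄, h₅, h₆⟩ := flipPair_config7 a b c d e f g
  have h := evalCoeffs_eq_zero α (residualCoeffs_eq_zero a b c d e f g)
  simp only [residualCoeffs, evalCoeffs_addCoeffs, evalCoeffs_bondCoeffs] at h
  have hs₀ : spin (config7 a b c d e f g) 0 = (a : ℤ) := rfl
  have hs₁ : spin (config7 a b c d e f g) 1 = (b : ℤ) := rfl
  have hs₂ : spin (config7 a b c d e f g) 2 = (c : ℤ) := rfl
  have hs₃ : spin (config7 a b c d e f g) 3 = (d : ℤ) := rfl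
  have hs₄ : spin (config7 a b c d e f g) 4 = (e : ℤ) := rfl
  have hs₅ : spin (config7 a b c d e f g) 5 = (f : ℤ) := rfl
  have hs₆ : spin (config7 a b c d e f g) 6 = (g : ℤ) := rfl
  rw [Halpha, Hxyz, sum_zmod_seven, h₀, h₁, h₂, h₃, h₄, h₅, h₆,
    show (0 : ZMod 7) + 1 = 1 from rfl, show (1 : ZMod 7) + 1 = 2 from rfl,
    show (2 : ZMod 7) + 1 = 3 from rfl, show (3 : ZMod 7) + 1 = 4 from rfl,
    show (4 : ZMod 7) + 1 = 5 from rfl, show (5 : ZMod 7) + 1 = 6 from rfl,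
    show (6 : ZMod 7) + 1 = 0 from rfl, hs₀, hs₁, hs₂, hs₃, hs₄, hs₅, hs₆]
  simp only [psi7_eq_evalCoeffs_spinCoeffs]
  push_cast
  linear_combination (-1 / 4 : ℂ) * h

/-- For `N = 7`, the displayed vector is an eigenvector of `H(α)` with eigenvalue
`−(7/4)(3+α²)`. -/
theorem psi7_eigenvector (α : ℝ) :
    Halpha 7 α (Psi7 α) = ((-(7 / 4) * (3 + α ^ 2) : ℝ) : ℂ) • Psi7 α := by
  funext μ
  have hμ : μ = config7 (μ 0) (μ 1) (μ 2) (μ 3) (μ 4) (μ 5) (μ 6) := by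
    funext j
    fin_cases j <;> rfl
  rw [hμ, halpha_psi7_config7, Pi.smul_apply, smul_eq_mul]
  push_cast
  rfl
end

section
/- Let N ≥ 2, let a, b, c, d ∈ ℂ, and let Φ : {−1,+1}^N → ℂ satisfy, for all μ ∈ {−1,+1} and all μ₃,…,μ_N ∈ {−1,+1}, the two equations a·Φ(μ,μ,μ₃,…,μ_N) + d·Φ(−μ,−μ,μ₃,…,μ_N) = (a+b)·Φ(μ,μ₃,…,μ_N,μ) and c·Φ(μ,−μ,μ₃,…,μ_N) + b·Φ(−μ,μ,μ₃,…,μ_N) = (a+b)·Φ(μ,μ₃,…,μ_N,−μ). Then (a−c) · Σ_{μ,μ₃,…,μ_N} Φ(μ,−μ,μ₃,…,μ_N) = (d−b) · Σ_{μ,μ₃,…,μ_N} Φ(μ,μ,μ₃,…,μ_N), i.e. the total weight of configurations whose first two spins are antiparallel and the total weight of configurations whose first two spins are parallel are in the ratio (d−b) : (a−c). (These two equations express that Φ is an eigenvector of the one-defect shift operator U(v) of the eight-vertex model with Boltzmann weights a, b, c, d and eigenvalue a + b.) -/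
open Finset

/-- A sum over the signs `±1` may be written as the sum over any sign and its negative. -/
theorem Int.sum_units_eq_add_neg (g : ℤˣ → ℂ) (μ : ℤˣ) : ∑ ν : ℤˣ, g ν = g μ + g (-μ) := by
  rcases Int.units_eq_one_or μ with rfl | rfl <;> simp [add_comm]

/-- Summing over all configurations by splitting on the first spin. -/
theorem sum_cons_add_sum_cons_neg {n : ℕ} (f : (Fin (n + 1) → ℤˣ) → ℂ) (μ : ℤˣ) :
    ∑ t : Fin n → ℤˣ, f (Fin.cons μ t) + ∑ t : Fin n → ℤˣ, f (Fin.cons (-μ) t) = ∑ s, f s := by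
  rw [← Int.sum_units_eq_add_neg (fun ν => ∑ t : Fin n → ℤˣ, f (Fin.cons ν t)) μ,
    ← Fintype.sum_prod_type' (fun (ν : ℤˣ) (t : Fin n → ℤˣ) => f (Fin.cons ν t))]
  exact (Fin.consEquiv fun _ : Fin (n + 1) => ℤˣ).sum_comp f

/-- Summing over all configurations by splitting on the last spin. -/
theorem sum_snoc_add_sum_snoc_neg {n : ℕ} (f : (Fin (n + 1) → ℤˣ) → ℂ) (μ : ℤˣ) :
    ∑ t : Fin n → ℤˣ, f (Fin.snoc t μ) + ∑ t : Fin n → ℤˣ, f (Fin.snoc t (-μ)) = ∑ s, f s := by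
  rw [← Int.sum_units_eq_add_neg (fun ν => ∑ t : Fin n → ℤˣ, f (Fin.snoc t ν)) μ,
    ← Fintype.sum_prod_type' (fun (ν : ℤˣ) (t : Fin n → ℤˣ) => f (Fin.snoc t ν))]
  exact (Fin.snocEquiv fun _ : Fin (n + 1) => ℤˣ).sum_comp f

/-- If `Φ` is an eigenvector of the one-defect shift operator of the eight-vertex model
with Boltzmann weights `a, b, c, d` and eigenvalue `a + b` (the two displayed equations),
then the antiparallel and parallel total weights are in the ratio `(d−b) : (a−c)`. -/
theorem antiferromagneticity_ratio (n : ℕ) (a b c d : ℂ)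
    (Φ : (Fin (n + 2) → ℤˣ) → ℂ)
    (h1 : ∀ (μ : ℤˣ) (t : Fin n → ℤˣ),
      a * Φ (Fin.cons μ (Fin.cons μ t)) + d * Φ (Fin.cons (-μ) (Fin.cons (-μ) t))
        = (a + b) * Φ (Fin.cons μ (Fin.snoc t μ)))
    (h2 : ∀ (μ : ℤˣ) (t : Fin n → ℤˣ),
      c * Φ (Fin.cons μ (Fin.cons (-μ) t)) + b * Φ (Fin.cons (-μ) (Fin.cons μ t))
        = (a + b) * Φ (Fin.cons μ (Fin.snoc t (-μ)))) :
    (a - c) * ∑ μ : ℤˣ, ∑ t : Fin n → ℤˣ, Φ (Fin.cons μ (Fin.cons (-μ) t))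
      = (d - b) * ∑ μ : ℤˣ, ∑ t : Fin n → ℤˣ, Φ (Fin.cons μ (Fin.cons μ t)) := by
  have split (μ : ℤˣ) := (sum_snoc_add_sum_snoc_neg (fun s => Φ (Fin.cons μ s)) μ).trans
    (sum_cons_add_sum_cons_neg (fun s => Φ (Fin.cons μ s)) μ).symm
  have parallel (μ : ℤˣ) := Finset.sum_congr (rfl : (univ : Finset (Fin n → ℤˣ)) = univ)
    fun t _ => h1 μ t
  have antiparallel (μ : ℤˣ) := Finset.sum_congr (rfl : (univ : Finset (Fin n → ℤˣ)) = univ)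
    fun t _ => h2 μ t
  simp only [sum_add_distrib, ← mul_sum] at parallel antiparallel
  simp only [Int.sum_units_eq_add_neg _ 1, neg_neg]
  have p₁ := parallel 1
  have p₂ := parallel (-1)
  have q₁ := antiparallel 1
  have q₂ := antiparallel (-1)
  have s₁ := split 1
  have s₂ := split (-1)
  simp only [neg_neg] at p₁ p₂ q₁ q₂ s₁ s₂
  linear_combination -p₁ - p₂ - q₁ - q₂ - (a + b) * s₁ - (a + b) * s₂
end

section
/- Let α ∈ ℝ and let Ψ : {−1,+1}⁵ → ℂ be defined by: Ψ = α + α³ on (−,−,−,−,−); Ψ = 1 + α² on the 5 cyclic shifts of (−,−,−,+,+); Ψ = 2 on the 5 cyclic shifts of (−,−,+,−,+); Ψ = 2α on the 5 cyclic shifts of (−,+,+,+,+); and Ψ(μ) = 0 otherwise. Then (α+1) · Σ_{μ,μ₃,μ₄,μ₅} Ψ(μ,−μ,μ₃,μ₄,μ₅) = 2 · Σ_{μ,μ₃,μ₄,μ₅} Ψ(μ,μ,μ₃,μ₄,μ₅), where the sums run over μ, μ₃, μ₄, μ₅ ∈ {−1,+1}; equivalently, for α ≠ −1, the chain degree of antiferromagneticity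 Ξ(α) = [Σ Ψ(μ,−μ,μ₃,μ₄,μ₅)] / [Σ Ψ(μ,μ,μ₃,μ₄,μ₅)] equals 2/(α+1). -/
open Finset

/-- The length-5 configuration `(a, b, c, d, e)`. -/
def cfg5 (a b c d e : ℤˣ) : Config 5 := fun j =>
  if j = 0 then a else if j = 1 then b else if j = 2 then c else if j = 3 then d else e

/-- A sum over the two spin values. -/
lemma sum_units_int {M : Type*} [AddCommMonoid M] (f : ℤˣ → M) :
    ∑ μ : ℤˣ, f μ = f 1 + f (-1) := by
  rw [show (univ : Finset ℤˣ) = {1, -1} from rfl, sum_pair (by decide)]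

set_option maxRecDepth 10000 in
/-- The total weight of the configurations whose first two spins are antiparallel. -/
lemma sum_Psi5_antiparallel (α : ℝ) :
    ∑ μ : ℤˣ, ∑ μ₃ : ℤˣ, ∑ μ₄ : ℤˣ, ∑ μ₅ : ℤˣ, Psi5 α (cfg5 μ (-μ) μ₃ μ₄ μ₅)
      = 2 * ((α : ℂ) ^ 2 + 2 * α + 5) := by
  simp +decide only [sum_units_int, Psi5, if_true, if_false]
  push_cast
  ring

set_option maxRecDepth 10000 in
/-- The total weight of the configurations whose first two spins are parallel. -/
lemma sum_Psi5_parallel (α : ℝ) :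
    ∑ μ : ℤˣ, ∑ μ₃ : ℤˣ, ∑ μ₄ : ℤˣ, ∑ μ₅ : ℤˣ, Psi5 α (cfg5 μ μ μ₃ μ₄ μ₅)
      = ((α : ℂ) + 1) * ((α : ℂ) ^ 2 + 2 * α + 5) := by
  simp +decide only [sum_units_int, Psi5, if_true, if_false]
  push_cast
  ring

/-- For `N = 5`: `(α+1) Σ Ψ(μ,−μ,μ₃,μ₄,μ₅) = 2 Σ Ψ(μ,μ,μ₃,μ₄,μ₅)`, i.e. for `α ≠ −1`
the chain degree of antiferromagneticity `Ξ(α)` equals `2/(α+1)`. -/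
theorem antiferromagneticity_N5 (α : ℝ) :
    (((α : ℂ) + 1) * ∑ μ : ℤˣ, ∑ μ₃ : ℤˣ, ∑ μ₄ : ℤˣ, ∑ μ₅ : ℤˣ,
          Psi5 α (cfg5 μ (-μ) μ₃ μ₄ μ₅)
        = 2 * ∑ μ : ℤˣ, ∑ μ₃ : ℤˣ, ∑ μ₄ : ℤˣ, ∑ μ₅ : ℤˣ,
          Psi5 α (cfg5 μ μ μ₃ μ₄ μ₅))
      ∧ (α ≠ -1 →
        (∑ μ : ℤˣ, ∑ μ₃ : ℤˣ, ∑ μ₄ : ℤˣ, ∑ μ₅ : ℤˣ, Psi5 α (cfg5 μ (-μ) μ₃ μ₄ μ₅))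
            / (∑ μ : ℤˣ, ∑ μ₃ : ℤˣ, ∑ μ₄ : ℤˣ, ∑ μ₅ : ℤˣ, Psi5 α (cfg5 μ μ μ₃ μ₄ μ₅))
          = 2 / ((α : ℂ) + 1)) := by
  rw [sum_Psi5_antiparallel, sum_Psi5_parallel]
  refine ⟨by ring, fun _ => ?_⟩
  have hq : (α : ℂ) ^ 2 + 2 * α + 5 ≠ 0 := by
    have h : α ^ 2 + 2 * α + 5 ≠ 0 := by nlinarith [sq_nonneg (α + 1)]
    exact_mod_cast h
  exact mul_div_mul_right _ _ hq
end
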